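/- arXiv:2206.13197 — 2 statements merged into one kernel-verified Lean document; each statement's English description precedes it below -/
import Mathlib

section
/- Let A be a unital complex Banach algebra. If A has no nontrivial idempotents, then the spectrum sp(a) of every element a ∈ A is a connected subset of ℂ. -/
open MeasureTheory Filter Topology
noncomputable def dbarOp (f : ℂ → ℂ) (z : ℂ) : ℂ :=
  fderiv ℝ f z 1 + Complex.I * fderiv ℝ f z Complex.I

lemma dbarOp_continuous {f : ℂ → ℂ} (hf : ContDiff ℝ 1 f) : Continuous (dbarOp f) := by
  have := hf.continuous_fderiv one_ne_zero
  unfold dbarOp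
  fun_prop

lemma dbarOp_eq_zero_of_notMem {f : ℂ → ℂ} {z : ℂ} (hz : z ∉ tsupport f) : dbarOp f z = 0 := by
  have : fderiv ℝ f z = 0 := by
    by_contra h
    exact hz (support_fderiv_subset ℝ h)
  simp [dbarOp, this]

lemma dbarOp_hasCompactSupport {f : ℂ → ℂ} (hc : HasCompactSupport f) :
    HasCompactSupport (dbarOp f) :=
  HasCompactSupport.intro hc fun _ hz => dbarOp_eq_zero_of_notMem hz

lemma dbarOp_congr {f g : ℂ → ℂ} {z : ℂ} (h : f =ᶠ[𝓝 z] g) : dbarOp f z = dbarOp g z := by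
  simp [dbarOp, h.fderiv_eq]

lemma integral_dbarOp {f : ℂ → ℂ} (hf : ContDiff ℝ 1 f) (hc : HasCompactSupport f) :
    ∫ z, dbarOp f z = 0 := by
  have hcont := hf.continuous_fderiv one_ne_zero
  have hi : ∀ v : ℂ, Integrable (fun z => fderiv ℝ f z v) := fun v =>
    Continuous.integrable_of_hasCompactSupport (by fun_prop) (hc.fderiv_apply ℝ v)
  have key : ∀ v : ℂ, ∫ z, fderiv ℝ f z v = 0 := by
    intro v
    have := integral_smul_fderiv_eq_neg_fderiv_smul_of_integrable (μ := (volume : Measure ℂ))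
      (f := fun _ : ℂ => (1 : ℝ)) (g := f) (v := v) (by simp) (by simpa using hi v)
      (by simpa using hf.continuous.integrable_of_hasCompactSupport hc)
      (fun _ _ => by fun_prop) (fun x _ => hf.differentiable one_ne_zero x)
    simpa using this
  unfold dbarOp
  rw [integral_add (hi 1) ((hi Complex.I).const_mul _), integral_const_mul, key, key]
  simp

lemma exists_kernel : ∃ ψ : ℂ → ℂ, ContDiff ℝ 1 ψ ∧ HasCompactSupport ψ ∧
    (∀ᶠ z in 𝓝 (0 : ℂ), ψ z = 1) ∧ ∫ z, z⁻¹ * dbarOp ψ z ≠ 0 := by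
  set g : ℝ → ℝ := fun t => Real.smoothTransition (2 - t) with hg
  have hgc : ContDiff ℝ 1 g := by
    have := Real.smoothTransition.contDiff (n := 1)
    exact this.comp (contDiff_const.sub contDiff_id)
  have hgd : Differentiable ℝ g := hgc.differentiable one_ne_zero
  have hga : Antitone g := fun x y hxy => Real.smoothTransition.monotone (by linarith)
  have hg1 : ∀ t ≤ 1, g t = 1 := fun t ht => Real.smoothTransition.one_of_one_le (by linarith)
  have hg0 : ∀ t, 2 ≤ t → g t = 0 := fun t ht => Real.smoothTransition.zero_of_nonpos (by linarith)
  set N : ℂ → ℝ := fun z => z.re * z.re + z.im * z.im with hN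
  have hNc : Continuous N := by fun_prop
  have hNz : ∀ z, N z = ‖z‖ ^ 2 := fun z => by
    rw [← Complex.normSq_eq_norm_sq]; rfl
  have hNd : ∀ z : ℂ, HasFDerivAt N ((2 * z.re) • Complex.reCLM + (2 * z.im) • Complex.imCLM) z := by
    intro z
    have h1 := Complex.reCLM.hasFDerivAt (x := z)
    have h2 := Complex.imCLM.hasFDerivAt (x := z)
    refine ((h1.mul h1).add (h2.mul h2)).congr_fderiv ?_
    ext v <;> simp <;> ring
  have hNcd : ContDiff ℝ 1 N :=
    (Complex.reCLM.contDiff.mul Complex.reCLM.contDiff).add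
      (Complex.imCLM.contDiff.mul Complex.imCLM.contDiff)
  set ψ : ℂ → ℂ := fun z => ((g (N z) : ℝ) : ℂ) with hψ
  have hsupp : ∀ z : ℂ, z ∉ Metric.closedBall (0 : ℂ) 2 → 2 < N z := by
    intro z hz
    simp only [Metric.mem_closedBall, dist_zero_right, not_le] at hz
    rw [hNz]; nlinarith
  have hψd : ∀ z v, fderiv ℝ ψ z v =
      ((deriv g (N z) * (2 * z.re * v.re + 2 * z.im * v.im) : ℝ) : ℂ) := by
    intro z v
    have h1 := (hgd (N z)).hasDerivAt.comp_hasFDerivAt z (hNd z)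
    have h2 := Complex.ofRealCLM.hasFDerivAt.comp z h1
    have h3 : fderiv ℝ ψ z = _ := h2.fderiv
    rw [h3]
    simp
    ring
  have hd0 : deriv g 0 = 0 := by
    have : g =ᶠ[𝓝 0] fun _ => 1 := by
      filter_upwards [gt_mem_nhds (show (0 : ℝ) < 1 by norm_num)] with t ht using hg1 t ht.le
    rw [this.deriv_eq]; simp
  have hbar : ∀ z : ℂ, z⁻¹ * dbarOp ψ z = ((2 * deriv g (N z) : ℝ) : ℂ) := by
    intro z
    by_cases hz : z = 0
    · subst hz
      have : N 0 = 0 := by simp [hN]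
      simp [this, hd0]
    · rw [inv_mul_eq_iff_eq_mul₀ hz, dbarOp, hψd, hψd]
      have := Complex.re_add_im z
      simp only [Complex.one_re, Complex.one_im, Complex.I_re, Complex.I_im, mul_one, mul_zero,
        add_zero, zero_add]
      push_cast
      linear_combination 2 * ((deriv g (N z) : ℝ) : ℂ) * this
  refine ⟨ψ, ?_, ?_, ?_, ?_⟩
  · exact Complex.ofRealCLM.contDiff.comp (hgc.comp hNcd)
  · refine HasCompactSupport.intro (isCompact_closedBall (0 : ℂ) 2) fun z hz => ?_
    simp [hψ, hg0 _ (hsupp z hz).le]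
  · have : ∀ᶠ z in 𝓝 (0 : ℂ), N z < 1 :=
      hNc.continuousAt.eventually (gt_mem_nhds (by simp [hN]))
    filter_upwards [this] with z hz
    simp [hψ, hg1 _ hz.le]
  · simp_rw [hbar]
    rw [integral_complex_ofReal]
    have hdc : Continuous (deriv g) := hgc.continuous_deriv le_rfl
    have hpos : 0 < ∫ z, -(2 * deriv g (N z)) := by
      obtain ⟨c, hc, hslope⟩ := exists_deriv_eq_slope g (show (0 : ℝ) < 2 by norm_num)
        hgd.continuous.continuousOn hgd.differentiableOn
      refine Continuous.integral_pos_of_hasCompactSupport_nonneg_nonzero (x := (Real.sqrt c : ℂ))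
        (by fun_prop) ?_ ?_ ?_
      · refine HasCompactSupport.intro (isCompact_closedBall (0 : ℂ) 2) fun z hz => ?_
        have : g =ᶠ[𝓝 (N z)] fun _ => 0 := by
          filter_upwards [lt_mem_nhds (hsupp z hz)] with t ht using hg0 t ht.le
        rw [this.deriv_eq]; simp
      · intro z
        have := hga.deriv_nonpos (x := N z)
        simp only [Pi.zero_apply]; linarith
      · have : N (Real.sqrt c : ℂ) = c := by
          simp [hN, Real.mul_self_sqrt hc.1.le]
        rw [this, hslope, hg0 2 le_rfl, hg1 0 (by norm_num)]
        norm_num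
    rw [integral_neg] at hpos
    intro h0
    rw [Complex.ofReal_eq_zero] at h0
    linarith

/-- local Pompeiu formula -/
lemma pompeiu {ψ φ : ℂ → ℂ} (hψ : ContDiff ℝ 1 ψ) (hψc : HasCompactSupport ψ)
    (hψ1 : ∀ᶠ z in 𝓝 (0 : ℂ), ψ z = 1) (hφ : ContDiff ℝ 1 φ) (hφc : HasCompactSupport φ)
    (w c : ℂ) (hw : ∀ᶠ z in 𝓝 w, φ z = c) :
    ∫ z, (z - w)⁻¹ * dbarOp φ z = c * ∫ z, z⁻¹ * dbarOp ψ z := by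
  set θ : ℂ → ℂ := fun z => ψ (z - w) with hθ
  have hθd : ContDiff ℝ 1 θ := hψ.comp (contDiff_id.sub contDiff_const)
  have hθc : HasCompactSupport θ := hψc.comp_homeomorph (Homeomorph.subRight w)
  have ht : Tendsto (fun z : ℂ => z - w) (𝓝 w) (𝓝 0) := by
    have : ContinuousAt (fun z : ℂ => z - w) w := by fun_prop
    simpa [ContinuousAt] using this
  have hθ1 : ∀ᶠ z in 𝓝 w, θ z = 1 := ht.eventually hψ1
  have hθb : ∀ z, dbarOp θ z = dbarOp ψ (z - w) := by
    intro z
    simp only [dbarOp, hθ]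
    simp only [sub_eq_add_neg, fderiv_comp_add_right]
  have hint : ∀ (f : ℂ → ℂ) (d : ℂ), ContDiff ℝ 1 f → HasCompactSupport f →
      (∀ᶠ z in 𝓝 w, f z = d) → Integrable fun z => (z - w)⁻¹ * dbarOp f z := by
    intro f d hf hfc hfw
    refine Continuous.integrable_of_hasCompactSupport ?_ (dbarOp_hasCompactSupport hfc).mul_left
    rw [continuous_iff_continuousAt]
    intro z
    by_cases hz : z = w
    · subst hz
      have : (fun y => (y - z)⁻¹ * dbarOp f y) =ᶠ[𝓝 z] fun _ => 0 := by
        filter_upwards [hfw.eventually_nhds] with y hy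
        rw [dbarOp_congr (g := fun _ => d) hy]
        simp [dbarOp]
      exact continuousAt_const.congr this.symm
    · have := (dbarOp_continuous hf).continuousAt (x := z)
      have h2 : ContinuousAt (fun y : ℂ => (y - w)⁻¹) z :=
        ContinuousAt.inv₀ (by fun_prop) (sub_ne_zero.2 hz)
      exact h2.mul this
  set F : ℂ → ℂ := fun z => (z - w)⁻¹ * (φ z - c * θ z) with hF
  have hF0 : F =ᶠ[𝓝 w] fun _ => 0 := by
    filter_upwards [hw, hθ1] with z h1 h2
    simp [hF, h1, h2]
  have hFd : ContDiff ℝ 1 F := by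
    rw [contDiff_iff_contDiffAt]
    intro z
    by_cases hz : z = w
    · subst hz
      exact contDiffAt_const.congr_of_eventuallyEq hF0
    · have h2 : ContDiffAt ℝ 1 (fun y : ℂ => (y - w)⁻¹) z :=
        ContDiffAt.inv (contDiffAt_id.sub contDiffAt_const) (sub_ne_zero.2 hz)
      exact h2.mul (hφ.contDiffAt.sub (contDiffAt_const.mul hθd.contDiffAt))
  have hFc : HasCompactSupport F := (hφc.sub hθc.mul_left).mul_left
  have hFb : ∀ z, dbarOp F z = (z - w)⁻¹ * dbarOp φ z - c * ((z - w)⁻¹ * dbarOp θ z) := by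
    intro z
    by_cases hz : z = w
    · subst hz
      rw [dbarOp_congr hF0]
      simp [dbarOp]
    · have h1 : HasFDerivAt (fun y : ℂ => (y - w)⁻¹)
          ((ContinuousLinearMap.toSpanSingleton ℂ (-((z - w) ^ 2)⁻¹)).restrictScalars ℝ) z := by
        have : HasDerivAt (fun y : ℂ => (y - w)⁻¹) (-((z - w) ^ 2)⁻¹) z := by
          have h := ((hasDerivAt_id z).sub_const w).inv (sub_ne_zero.2 hz)
          simp only [neg_div, one_div, id] at h
          exact h
        exact this.hasFDerivAt.restrictScalars ℝ
      have h2 := (hφ.differentiable one_ne_zero z).hasFDerivAt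
      have h3 := (hθd.differentiable one_ne_zero z).hasFDerivAt
      have h4 : fderiv ℝ F z = _ := (h1.mul (h2.sub (h3.const_mul c))).fderiv
      simp only [dbarOp, h4]
      simp
      ring_nf
      simp
  have h0 := integral_dbarOp hFd hFc
  simp_rw [hFb] at h0
  rw [integral_sub (hint φ c hφ hφc hw) ((hint θ 1 hθd hθc hθ1).const_mul c),
    integral_const_mul, sub_eq_zero] at h0
  rw [h0]
  congr 1
  simp_rw [hθb]
  exact integral_sub_right_eq_self (fun z => z⁻¹ * dbarOp ψ z) w


lemma sqrt_coeff_bound : ∃ C > 0, ∀ n : ℕ, ‖Ring.choose (1 / 2 : ℂ) n‖ ≤ C * 2 ^ n := by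
  have h : ((1 / 2 : NNReal) : ENNReal) < (binomialSeries ℂ (1 / 2 : ℂ)).radius := by
    refine lt_of_lt_of_le ?_ binomialSeries_radius_ge_one
    rw [← ENNReal.coe_one, ENNReal.coe_lt_coe, ← NNReal.coe_lt_coe]
    norm_num
  obtain ⟨C, hC, hb⟩ := (binomialSeries ℂ (1 / 2 : ℂ)).norm_mul_pow_le_of_lt_radius h
  refine ⟨C, hC, fun n => ?_⟩
  have := hb n
  rw [binomialSeries, FormalMultilinearSeries.ofScalars_norm] at this
  have h2 : (0 : ℝ) < 2 ^ n := by positivity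
  simp only [NNReal.coe_div, NNReal.coe_one, NNReal.coe_ofNat, div_pow, one_pow] at this
  rw [mul_one_div, div_le_iff₀ h2] at this
  exact this

lemma sqrt_coeff_conv (n : ℕ) :
    ∑ p ∈ Finset.HasAntidiagonal.antidiagonal n, Ring.choose (1 / 2 : ℂ) p.1 * Ring.choose (1 / 2 : ℂ) p.2 =
      Nat.choose 1 n := by
  rw [← Ring.choose_natCast, ← Ring.add_choose_eq n (Commute.all _ _)]
  norm_num

lemma exists_sqrt {B : Type*} [NormedCommRing B] [NormedAlgebra ℂ B] [CompleteSpace B]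
    (x : B) (hx : spectralRadius ℂ x = 0) :
    ∃ t : B, t * t = 1 + x ∧
      ∀ χ : WeakDual.characterSpace ℂ B, χ x = 0 → χ t = 1 := by
  obtain ⟨C, hC, hb⟩ := sqrt_coeff_bound
  have hev : ∀ᶠ n : ℕ in atTop, ‖x ^ n‖ ≤ (1 / 4 : ℝ) ^ n := by
    have h1 := spectrum.pow_nnnorm_pow_one_div_tendsto_nhds_spectralRadius x
    rw [hx] at h1
    have h2 := h1.eventually (gt_mem_nhds (show (0 : ENNReal) < ((1 / 4 : NNReal) : ENNReal) by
      rw [ENNReal.coe_pos]; norm_num))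
    filter_upwards [h2, eventually_gt_atTop 0] with n hn hn0
    have h3 : (‖x ^ n‖₊ : ENNReal) ≤ (((1 / 4 : NNReal) : ENNReal)) ^ n := by
      have := ENNReal.rpow_le_rpow hn.le (Nat.cast_nonneg n)
      rwa [← ENNReal.rpow_mul, one_div_mul_cancel (by positivity), ENNReal.rpow_one,
        ENNReal.rpow_natCast] at this
    have h4 : ‖x ^ n‖₊ ≤ (1 / 4 : NNReal) ^ n := by exact_mod_cast h3
    exact_mod_cast h4
  have hs : Summable fun n : ℕ => ‖Ring.choose (1 / 2 : ℂ) n • x ^ n‖ := by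
    have hg : Summable fun n : ℕ => C * (1 / 2 : ℝ) ^ n :=
      (summable_geometric_of_lt_one (by norm_num) (by norm_num)).mul_left C
    refine summable_of_isBigO_nat hg (Asymptotics.IsBigO.of_bound 1 ?_)
    filter_upwards [hev] with n hn
    rw [norm_norm, one_mul, norm_smul]
    calc _ ≤ (C * 2 ^ n) * (1 / 4 : ℝ) ^ n := by
          gcongr
          exact hb n
      _ = C * (1 / 2 : ℝ) ^ n := by
          rw [mul_assoc, ← mul_pow]; norm_num
      _ ≤ _ := le_abs_self _
  refine ⟨∑' n : ℕ, Ring.choose (1 / 2 : ℂ) n • x ^ n, ?_, ?_⟩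
  · rw [tsum_mul_tsum_eq_tsum_sum_antidiagonal_of_summable_norm hs hs]
    have : ∀ n : ℕ, ∑ p ∈ Finset.HasAntidiagonal.antidiagonal n, (Ring.choose (1 / 2 : ℂ) p.1 • x ^ p.1) *
        (Ring.choose (1 / 2 : ℂ) p.2 • x ^ p.2) = (Nat.choose 1 n : ℂ) • x ^ n := by
      intro n
      rw [← sqrt_coeff_conv, Finset.sum_smul]
      refine Finset.sum_congr rfl fun p hp => ?_
      rw [smul_mul_smul_comm, ← pow_add, Finset.HasAntidiagonal.mem_antidiagonal.1 hp]
    simp_rw [this]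
    rw [tsum_eq_sum (s := Finset.range 2)]
    · simp [Finset.sum_range_succ]
    · intro n hn
      rw [Nat.choose_eq_zero_of_lt (by simpa using hn)]
      simp
  · intro χ hχ
    have h1 := hs.of_norm.hasSum.mapL (WeakDual.CharacterSpace.toCLM χ)
    have h2 := h1.tsum_eq
    simp only [WeakDual.CharacterSpace.coe_toCLM, map_smul, map_pow, hχ] at h2
    rw [← h2, tsum_eq_single 0]
    · simp
    · intro n hn; simp [hn]

/-- lifting -/
lemma riesz_exists_idem {B : Type*} [NormedCommRing B] [NormedAlgebra ℂ B] [CompleteSpace B]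
    (b : B) (hb : ∀ χ : WeakDual.characterSpace ℂ B, χ b = 0 ∨ χ b = 1) :
    ∃ e : B, e * e = e ∧ ∀ χ : WeakDual.characterSpace ℂ B, χ e = χ b := by
  have hx : ∀ χ : WeakDual.characterSpace ℂ B, χ (4 * (b * b - b)) = 0 := by
    intro χ
    rcases hb χ with h | h <;> simp [h]
  obtain ⟨t, ht, hχ⟩ := exists_sqrt (4 * (b * b - b)) (by
    simp only [spectralRadius, ENNReal.iSup_eq_zero]
    intro z hz
    obtain ⟨χ, rfl⟩ := WeakDual.CharacterSpace.mem_spectrum_iff_exists.1 hz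
    simp [hx χ])
  have hu : IsUnit t := by
    by_contra hu
    obtain ⟨χ, h0⟩ := WeakDual.CharacterSpace.exists_apply_eq_zero hu
    rw [hχ χ (hx χ)] at h0
    exact one_ne_zero h0
  obtain ⟨s, hs⟩ := hu.exists_right_inv
  set u := (2 * b - 1) * s with hu
  have hu2 : u * u = 1 := by
    have : u * u = (1 + 4 * (b * b - b)) * (s * s) := by rw [hu]; ring
    rw [this, ← ht]
    linear_combination (t * s + 1) * hs
  refine ⟨(1 / 2 : ℂ) • (1 + u), ?_, ?_⟩
  · rw [smul_mul_smul_comm]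
    have : (1 + u) * (1 + u) = (2 : ℂ) • (1 + u) := by
      rw [ofNat_smul_eq_nsmul ℂ 2, two_nsmul]
      linear_combination hu2
    rw [this, smul_smul]; norm_num
  · intro χ
    have h1 : χ s = 1 := by
      have := congrArg χ hs
      rw [map_mul, hχ χ (hx χ), one_mul, map_one] at this
      exact this
    simp only [map_smul, map_add, map_one, hu, map_mul, map_sub, h1, smul_eq_mul]
    have : χ (2 : B) = 2 := map_ofNat χ 2
    rw [this]; ring

lemma idem_of_separation {B : Type*} [NormedCommRing B] [NormedAlgebra ℂ B] [CompleteSpace B]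
    (a : B) (u v : Set ℂ) (hu : IsClosed u) (hv : IsClosed v)
    (huv : spectrum ℂ a ⊆ u ∪ v) (hd : Disjoint u v)
    (hnu : ¬ spectrum ℂ a ⊆ u) (hnv : ¬ spectrum ℂ a ⊆ v) :
    ∃ e : B, e * e = e ∧ e ≠ 0 ∧ e ≠ 1 := by
  obtain ⟨ψ, hψ, hψc, hψ1, hκ⟩ := exists_kernel
  set κ := ∫ z, z⁻¹ * dbarOp ψ z with hκd
  obtain ⟨R, hR⟩ := (spectrum.isCompact (𝕜 := ℂ) a).isBounded.subset_ball 0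
  set K := spectrum ℂ a with hK
  have hKc : IsClosed K := spectrum.isClosed a
  obtain ⟨f, hf0, hf1, -⟩ := exists_contMDiffMap_zero_one_nhds_of_isClosed (n := 1)
    (modelWithCornersSelf ℝ ℂ)
    (s := v ∪ (Metric.ball (0 : ℂ) R)ᶜ) (t := u ∩ K)
    (hv.union Metric.isOpen_ball.isClosed_compl) (hu.inter hKc) (by
      rw [Set.disjoint_left]
      rintro x (hx | hx) ⟨hxu, hxK⟩
      · exact Set.disjoint_left.1 hd hxu hx
      · exact hx (hR hxK))
  set φ : ℂ → ℂ := fun z => ((f z : ℝ) : ℂ) with hφd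
  have hφ : ContDiff ℝ 1 φ := Complex.ofRealCLM.contDiff.comp f.contMDiff.contDiff
  have hφc : HasCompactSupport φ := by
    refine HasCompactSupport.intro (isCompact_closedBall (0 : ℂ) R) fun z hz => ?_
    have : f z = 0 := hf0.self_of_nhdsSet z (Or.inr fun h => hz (Metric.ball_subset_closedBall h))
    simp [hφd, this]
  have hφ0 : ∀ w ∈ v, ∀ᶠ z in 𝓝 w, φ z = 0 := by
    intro w hw
    filter_upwards [hf0.filter_mono (nhds_le_nhdsSet (Set.mem_union_left _ hw))] with z hz
    simp [hφd, hz]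
  have hφ1 : ∀ w ∈ u, w ∈ K → ∀ᶠ z in 𝓝 w, φ z = 1 := by
    intro w hw hwK
    filter_upwards [hf1.filter_mono (nhds_le_nhdsSet (Set.mem_inter hw hwK))] with z hz
    simp [hφd, hz]
  have hloc : ∀ w ∈ K, ∃ c, ∀ᶠ z in 𝓝 w, φ z = c := by
    intro w hw
    rcases huv hw with h | h
    · exact ⟨1, hφ1 w h hw⟩
    · exact ⟨0, hφ0 w h⟩
  have hint : Integrable fun z : ℂ => dbarOp φ z • resolvent a z := by
    refine Continuous.integrable_of_hasCompactSupport ?_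
      (dbarOp_hasCompactSupport hφc).smul_right
    rw [continuous_iff_continuousAt]
    intro z
    by_cases hz : z ∈ K
    · obtain ⟨c, hc⟩ := hloc z hz
      have : (fun y => dbarOp φ y • resolvent a y) =ᶠ[𝓝 z] fun _ => 0 := by
        filter_upwards [hc.eventually_nhds] with y hy
        rw [dbarOp_congr (g := fun _ => c) hy]
        simp [dbarOp]
      exact continuousAt_const.congr this.symm
    · have hz' : z ∈ resolventSet ℂ a := by simpa [hK, spectrum] using hz
      exact (dbarOp_continuous hφ).continuousAt.smul
        (spectrum.hasDerivAt_resolvent_const_left hz').continuousAt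
  set b : B := κ⁻¹ • ∫ z : ℂ, dbarOp φ z • resolvent a z with hb
  have hχ : ∀ (χ : WeakDual.characterSpace ℂ B) (c : ℂ), (∀ᶠ z in 𝓝 (χ a), φ z = c) →
      χ b = c := by
    intro χ c hc
    have h1 := (WeakDual.CharacterSpace.toCLM χ).integral_comp_comm hint
    have h2 : ∀ z : ℂ, (WeakDual.CharacterSpace.toCLM χ) (dbarOp φ z • resolvent a z) =
        (z - χ a)⁻¹ * dbarOp φ z := by
      intro z
      rw [map_smul, WeakDual.CharacterSpace.coe_toCLM, smul_eq_mul, mul_comm]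
      by_cases hz : z ∈ K
      · have : dbarOp φ z = 0 := by
          obtain ⟨c, hc⟩ := hloc z hz
          rw [dbarOp_congr (g := fun _ => c) hc]
          simp [dbarOp]
        simp [this]
      · have hz' : IsUnit (algebraMap ℂ B z - a) := by simpa [hK, spectrum.mem_iff] using hz
        congr 1
        have h3 := congrArg χ (Ring.mul_inverse_cancel _ hz')
        rw [map_mul, map_one, map_sub, AlgHomClass.commutes] at h3
        exact eq_inv_of_mul_eq_one_right h3
    simp_rw [h2] at h1
    rw [pompeiu hψ hψc hψ1 hφ hφc (χ a) c hc, WeakDual.CharacterSpace.coe_toCLM] at h1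
    rw [hb, map_smul, ← h1, smul_eq_mul, ← hκd, mul_comm c, inv_mul_cancel_left₀ hκ]
  have hmem : ∀ χ : WeakDual.characterSpace ℂ B, χ a ∈ K := fun χ =>
    WeakDual.CharacterSpace.mem_spectrum_iff_exists.2 ⟨χ, rfl⟩
  obtain ⟨e, he, heχ⟩ := riesz_exists_idem b (by
    intro χ
    rcases huv (hmem χ) with h | h
    · exact Or.inr (hχ χ 1 (hφ1 _ h (hmem χ)))
    · exact Or.inl (hχ χ 0 (hφ0 _ h)))
  refine ⟨e, he, ?_, ?_⟩
  · rintro rfl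
    obtain ⟨w, hw, hwv⟩ := Set.not_subset.1 hnv
    obtain ⟨χ, rfl⟩ := WeakDual.CharacterSpace.mem_spectrum_iff_exists.1 hw
    have := heχ χ
    rw [hχ χ 1 (hφ1 _ ((huv hw).resolve_right hwv) hw), map_zero] at this
    exact zero_ne_one this
  · rintro rfl
    obtain ⟨w, hw, hwu⟩ := Set.not_subset.1 hnu
    obtain ⟨χ, rfl⟩ := WeakDual.CharacterSpace.mem_spectrum_iff_exists.1 hw
    have := heχ χ
    rw [hχ χ 0 (hφ0 _ ((huv hw).resolve_left hwu)), map_one] at this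
    exact one_ne_zero this

/-- Let `A` be a (nontrivial) unital complex Banach algebra.  If `A` has no
nontrivial idempotents (every `a` with `a * a = a` is `0` or `1`), then the spectrum of every
element of `A` is a connected subset of `ℂ`. -/
theorem spectrum_isConnected_of_no_nontrivial_idempotents (A : Type*) [NormedRing A]
    [NormedAlgebra ℂ A] [CompleteSpace A] [Nontrivial A]
    (h : ∀ a : A, a * a = a → a = 0 ∨ a = 1) (a : A) :
    IsConnected (spectrum ℂ a) := by
  refine ⟨spectrum.nonempty a, ?_⟩
  rw [isPreconnected_iff_subset_of_fully_disjoint_closed (spectrum.isClosed a)]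
  intro u v hu hv huv hd
  by_contra! hcon
  let S : Subalgebra ℂ A := Subalgebra.centralizer ℂ (Set.centralizer {a})
  have hScomm : ∀ x y : S, x * y = y * x := by
    intro x y
    apply Subtype.ext
    exact Set.centralizer_centralizer_comm_of_comm (S := {a}) (by simp) _ x.2 _ y.2
  have hSclosed : IsClosed (S : Set A) := Set.isClosed_centralizer _
  have haS : a ∈ S := Set.subset_centralizer_centralizer (Set.mem_singleton a)
  letI : NormedCommRing S := { (inferInstance : NormedRing S) with mul_comm := hScomm }
  haveI : CompleteSpace S := hSclosed.completeSpace_coe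
  have hsp : spectrum ℂ (⟨a, haS⟩ : S) = spectrum ℂ a := by
    ext z
    rw [spectrum.mem_iff, spectrum.mem_iff, not_iff_not]
    constructor
    · intro hz
      exact hz.map S.val
    · rintro ⟨w, hw⟩
      have hinv : ((w⁻¹ : Aˣ) : A) ∈ S := by
        intro y hy
        have hya : a * y = y * a := hy a rfl
        have : Commute y (w : A) := by
          rw [hw]
          exact Commute.sub_right (Algebra.commutes z y).symm hya.symm
        exact this.units_inv_right
      refine IsUnit.of_mul_eq_one ⟨((w⁻¹ : Aˣ) : A), hinv⟩ ?_
      apply Subtype.ext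
      change (algebraMap ℂ A z - a) * ((w⁻¹ : Aˣ) : A) = 1
      rw [← hw, Units.mul_inv]
  obtain ⟨e, he, he0, he1⟩ := idem_of_separation (⟨a, haS⟩ : S) u v hu hv (by rwa [hsp]) hd
    (by rw [hsp]; exact hcon.1) (by rw [hsp]; exact hcon.2)
  rcases h (e : A) (congrArg Subtype.val he) with h0 | h1
  · exact he0 (Subtype.ext h0)
  · exact he1 (Subtype.ext h1)
end

section
/- Let A be a unital complex Banach algebra and let F ⊆ A be a dense subset. If the spectrum sp(b) is a connected subset of ℂ for every b ∈ F, then A has no nontrivial idempotents. -/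
lemma aux_res {A : Type*} [NormedRing A] [NormedAlgebra ℂ A] (a : A) (ha : a * a = a) (z : ℂ)
    (hz : z ≠ 1) :
    (1 - z • a) * ((1 - a) + (1 - z)⁻¹ • a) = 1 ∧ ((1 - a) + (1 - z)⁻¹ • a) * (1 - z • a) = 1 := by
  have h1 : (1 - z) ≠ 0 := sub_ne_zero.2 hz.symm
  have key : (1 - z)⁻¹ - z * (1 - z)⁻¹ = 1 := by field_simp
  have e : (1 - z)⁻¹ • a - (z * (1 - z)⁻¹) • a = a := by rw [← sub_smul, key, one_smul]
  constructor
  · have : (1 - z • a) * ((1 - a) + (1 - z)⁻¹ • a)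
        = 1 - a + ((1 - z)⁻¹ • a - (z * (1 - z)⁻¹) • a) := by
      simp only [sub_mul, mul_add, mul_sub, smul_mul_assoc, mul_smul_comm, ha, smul_smul, mul_one,
        one_mul, smul_sub]
      rw [mul_comm z]; abel
    rw [this, e]; abel
  · have : ((1 - a) + (1 - z)⁻¹ • a) * (1 - z • a)
        = 1 - a + ((1 - z)⁻¹ • a - (z * (1 - z)⁻¹) • a) := by
      simp only [sub_mul, add_mul, mul_sub, smul_mul_assoc, mul_smul_comm, ha, smul_smul, mul_one,
        one_mul, smul_sub]
      rw [sub_self, zero_add, smul_smul]; abel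
    rw [this, e]; abel

lemma aux_unit {A : Type*} [NormedRing A] [NormedAlgebra ℂ A] (b : A)
    (hb : spectrum ℂ b ⊆ Metric.ball 0 (1 / 2)) (z : ℂ) (hz : ‖z‖ ≤ 2) :
    IsUnit (1 - z • b) := by
  by_cases h0 : z = 0
  · simp [h0]
  have : z⁻¹ ∉ spectrum ℂ b := by
    intro h
    have := hb h
    rw [mem_ball_zero_iff, norm_inv] at this
    have hp : 0 < ‖z‖ := norm_pos_iff.2 h0
    have := inv_anti₀ hp hz
    linarith
  rw [spectrum.notMem_iff] at this
  have e : 1 - z • b = (Units.mk0 z h0) • (algebraMap ℂ A z⁻¹ - b) := by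
    rw [Units.smul_def, Units.val_mk0, smul_sub, Algebra.algebraMap_eq_smul_one, smul_smul,
      mul_inv_cancel₀ h0, one_smul]
  rw [e]
  exact this.smul _

lemma aux_key {A : Type*} [NormedRing A] [NormedAlgebra ℂ A] [CompleteSpace A] (a b : A)
    (ha : a * a = a) (C δ : ℝ) (hC : ‖1 - a‖ + ‖a‖ ≤ C) (hd : ‖b - a‖ ≤ δ)
    (h1 : 4 * C * δ ≤ 1) (hb : spectrum ℂ b ⊆ Metric.ball 0 (1 / 2)) :
    ‖a‖ ≤ 12 * C ^ 2 * δ := by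
  have hC0 : 0 ≤ C := le_trans (by positivity) hC
  have hd0 : 0 ≤ δ := le_trans (by positivity) hd
  let g : ℂ → A := fun z => (z - 1) • Ring.inverse (1 - z • b) - ((z - 1) • (1 - a) - a)
  have hdiff : ∀ z : ℂ, ‖z‖ ≤ 2 → DifferentiableAt ℂ g z := by
    intro z hz
    obtain ⟨u, hu⟩ := aux_unit b hb z hz
    have h2 : DifferentiableAt ℂ (fun z : ℂ => Ring.inverse (1 - z • b)) z := by
      have h3 : DifferentiableAt ℂ (Ring.inverse : A → A) (1 - z • b) := by
        rw [← hu]; exact differentiableAt_inverse u.isUnit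
      exact h3.comp z (f := fun z : ℂ => 1 - z • b) (by fun_prop)
    simp only [g]
    fun_prop
  have hcl : DiffContOnCl ℂ g (Metric.ball 0 2) := by
    apply DifferentiableOn.diffContOnCl
    intro z hz
    rw [closure_ball _ (by norm_num)] at hz
    exact (hdiff z (by simpa using hz)).differentiableWithinAt
  have hbd : ∀ z ∈ frontier (Metric.ball (0:ℂ) 2), ‖g z‖ ≤ 12 * C ^ 2 * δ := by
    intro z hz
    rw [frontier_ball _ (by norm_num), mem_sphere_zero_iff_norm] at hz
    have hz1 : z ≠ 1 := by rintro rfl; norm_num at hz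
    have hn1 : 1 ≤ ‖1 - z‖ := by
      have := norm_sub_norm_le z 1
      rw [norm_sub_rev] at this
      simp only [hz, norm_one] at this
      linarith
    have hn2 : ‖z - 1‖ ≤ 3 := by
      have := norm_sub_le z 1
      simp only [hz, norm_one] at this
      linarith
    obtain ⟨r1, r2⟩ := aux_res a ha z hz1
    set fa := (1 - a) + (1 - z)⁻¹ • a with hfa
    have hu := aux_unit b hb z hz.le
    have hfb := Ring.mul_inverse_cancel _ hu
    set fb := Ring.inverse (1 - z • b)
    have hfan : ‖fa‖ ≤ C := by
      refine le_trans (norm_add_le _ _) (le_trans ?_ hC)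
      gcongr
      rw [norm_smul, norm_inv]
      have : ‖1 - z‖⁻¹ ≤ 1 := inv_le_one_of_one_le₀ hn1
      nlinarith [norm_nonneg a]
    have hid : fb - fa = z • (fa * (b - a) * fb) := by
      have e1 : fb - fa = fa * ((1 - z • a) - (1 - z • b)) * fb := by
        rw [mul_sub, sub_mul, r2, one_mul, mul_assoc, hfb, mul_one]
      rw [e1, sub_sub_sub_cancel_left, ← smul_sub, mul_smul_comm, smul_mul_assoc]
    have hdn : ‖fb - fa‖ ≤ 2 * (C * δ * ‖fb‖) := by
      rw [hid, norm_smul, hz]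
      gcongr
      refine (norm_mul_le _ _).trans ?_
      gcongr
      refine (norm_mul_le _ _).trans ?_
      gcongr
    have hfbn : ‖fb‖ ≤ 2 * C := by
      have := norm_sub_norm_le fb fa
      nlinarith [norm_nonneg fb]
    have hge : g z = (z - 1) • (fb - fa) := by
      have : (z - 1) * (1 - z)⁻¹ = -1 := by
        have h1 : (1 - z) ≠ 0 := sub_ne_zero.2 hz1.symm
        field_simp; ring
      simp only [g, fb, smul_sub, hfa, smul_add, smul_smul, this, neg_one_smul]
      abel
    rw [hge, norm_smul]
    calc ‖z - 1‖ * ‖fb - fa‖ ≤ 3 * (2 * (C * δ * (2 * C))) := by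
          gcongr
          refine hdn.trans ?_
          gcongr
      _ = _ := by ring
  have := Complex.norm_le_of_forall_mem_frontier_norm_le Metric.isBounded_ball hcl hbd
    (z := 1) (subset_closure (by simp))
  simpa [g] using this

lemma aux_loc {A : Type*} [NormedRing A] [NormedAlgebra ℂ A] [CompleteSpace A] (a b : A)
    (ha : a * a = a) (C δ : ℝ) (hC : ‖1 - a‖ + ‖a‖ ≤ C) (hd : ‖b - a‖ ≤ δ)
    (h1 : 4 * C * δ ≤ 1) :
    spectrum ℂ b ⊆ Metric.ball 0 (1 / 2) ∪ Metric.ball 1 (1 / 2) := by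
  intro l hl
  by_contra hcon
  simp only [Set.mem_union, mem_ball_zero_iff, mem_ball_iff_norm, not_or, not_lt] at hcon
  obtain ⟨c0, c1⟩ := hcon
  apply hl
  have hC0 : 0 ≤ C := le_trans (by positivity) hC
  have hl0 : l ≠ 0 := by rintro rfl; norm_num at c0
  have hl1 : l ≠ 1 := by rintro rfl; norm_num at c1
  obtain ⟨r1, r2⟩ := aux_res a ha l⁻¹ (by simpa using hl1)
  set fa := (1 - a) + (1 - l⁻¹)⁻¹ • a with hfa
  have hfan : ‖l⁻¹ • fa‖ ≤ 2 * C := by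
    have e : l⁻¹ • fa = l⁻¹ • (1 - a) + (l - 1)⁻¹ • a := by
      rw [hfa, smul_add, smul_smul, ← mul_inv, mul_sub, mul_inv_cancel₀ hl0, mul_one]
    have i0 : ‖l‖⁻¹ ≤ 2 := by
      have := inv_anti₀ (by norm_num) c0
      norm_num at this; exact this
    have i1 : ‖l - 1‖⁻¹ ≤ 2 := by
      have := inv_anti₀ (by norm_num) c1
      norm_num at this; exact this
    rw [e]
    refine (norm_add_le _ _).trans ?_
    rw [norm_smul, norm_smul, norm_inv, norm_inv]
    calc _ ≤ 2 * ‖1 - a‖ + 2 * ‖a‖ := by gcongr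
      _ ≤ _ := by linarith
  have hsm : ‖(l⁻¹ • fa) * (b - a)‖ < 1 := by
    refine (norm_mul_le _ _).trans_lt ?_
    calc _ ≤ 2 * C * δ := by gcongr
      _ < 1 := by linarith
  have hun : IsUnit (1 - (l⁻¹ • fa) * (b - a)) := isUnit_one_sub_of_norm_lt_one hsm
  have hua : IsUnit (1 - l⁻¹ • a) := ⟨⟨_, _, r1, r2⟩, rfl⟩
  have e : algebraMap ℂ A l - b
      = (Units.mk0 l hl0) • ((1 - l⁻¹ • a) * (1 - (l⁻¹ • fa) * (b - a))) := by
    rw [Units.smul_def, Units.val_mk0, mul_sub, mul_one, ← mul_assoc, mul_smul_comm, r1,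
      smul_mul_assoc, one_mul, Algebra.algebraMap_eq_smul_one, smul_sub, smul_sub, smul_smul,
      smul_smul, mul_inv_cancel₀ hl0, one_smul, one_smul]
    abel
  change IsUnit _
  rw [e]
  exact (hua.mul hun).smul _

/-- Let `A` be a unital complex Banach algebra and let `F ⊆ A` be a dense
subset.  If the spectrum of every element of `F` is a connected subset of `ℂ`, then `A` has no
nontrivial idempotents: every `a ∈ A` with `a * a = a` is `0` or `1`. -/
theorem no_nontrivial_idempotents_of_connected_spectra (A : Type*) [NormedRing A]
    [NormedAlgebra ℂ A] [CompleteSpace A] (F : Set A) (hF : Dense F)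
    (h : ∀ b ∈ F, IsConnected (spectrum ℂ b)) :
    ∀ a : A, a * a = a → a = 0 ∨ a = 1 := by
  intro a ha
  by_contra hcon
  obtain ⟨n0, n1⟩ := not_or.1 hcon
  have p0 : 0 < ‖a‖ := norm_pos_iff.2 n0
  have p1 : 0 < ‖1 - a‖ := norm_pos_iff.2 (sub_ne_zero.2 (Ne.symm n1))
  obtain ⟨C, hCd⟩ : ∃ C, C = ‖1 - a‖ + ‖a‖ := ⟨_, rfl⟩
  have hC : 0 < C := by rw [hCd]; positivity
  obtain ⟨δ, hδ, d1, d2, d3⟩ : ∃ δ : ℝ, 0 < δ ∧ 4 * C * δ ≤ 1 ∧ 12 * C ^ 2 * δ < ‖a‖ ∧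
      12 * C ^ 2 * δ < ‖1 - a‖ := by
    have t : ∀ K : ℝ, Filter.Tendsto (fun δ : ℝ => K * δ) (nhdsWithin 0 (Set.Ioi 0)) (nhds 0) := by
      intro K
      have : Continuous (fun δ : ℝ => K * δ) := by fun_prop
      simpa using (this.tendsto 0).mono_left nhdsWithin_le_nhds
    have e1 := (t (4 * C)).eventually (eventually_le_nhds one_pos)
    have e2 := (t (12 * C ^ 2)).eventually (eventually_lt_nhds p0)
    have e3 := (t (12 * C ^ 2)).eventually (eventually_lt_nhds p1)
    have e0 : ∀ᶠ δ : ℝ in nhdsWithin 0 (Set.Ioi 0), 0 < δ := self_mem_nhdsWithin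
    exact (e0.and (e1.and (e2.and e3))).exists
  obtain ⟨b, hbF, hb⟩ := hF.exists_dist_lt a hδ
  rw [dist_eq_norm, norm_sub_rev] at hb
  have hloc := aux_loc a b ha C δ hCd.ge hb.le d1
  have hdisj : Disjoint (Metric.ball (0:ℂ) (1 / 2)) (Metric.ball 1 (1 / 2)) :=
    Metric.ball_disjoint_ball (by simp; norm_num)
  rcases (h b hbF).isPreconnected.subset_or_subset Metric.isOpen_ball Metric.isOpen_ball hdisj hloc
    with hs | hs
  · exact absurd (aux_key a b ha C δ hCd.ge hb.le d1 hs) (not_le.2 d2)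
  · refine absurd (aux_key (1 - a) (1 - b) ?_ C δ ?_ ?_ d1 ?_) (not_le.2 d3)
    · simp [mul_sub, sub_mul, ha]
    · rw [sub_sub_cancel, add_comm]; exact hCd.ge
    · rw [sub_sub_sub_cancel_left, norm_sub_rev]; exact hb.le
    · intro l hl
      have : 1 - l ∈ spectrum ℂ b := by
        rw [spectrum.mem_iff] at hl ⊢
        intro hu
        apply hl
        rw [← IsUnit.neg_iff]
        convert hu using 1
        rw [map_sub, map_one]; abel
      have := hs this
      rw [mem_ball_iff_norm] at this
      rw [mem_ball_zero_iff]
      simpa using this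
end
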